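/- Let λ, α > 0, ν > 0, β₁, β₂ ≥ 0, and for i ∈ {1,2} let Sᵢ, Rᵢ be Borel probability measures on [0,∞) with finite first moments μ_{i,1}, γ_{i,1} and Laplace transforms S̃ᵢ, R̃ᵢ; set hᵢ(z) = λ + βᵢ − λz − βᵢR̃ᵢ(λ − λz), δᵢ(z) = S̃ᵢ(hᵢ(z)), and g(u) = [λ(1 − δ₁(u)) + α(1 − δ₂(u))]/(ν(δ₁(u) − u)). Assume λμ_{1,1}(1 + β₁γ_{1,1}) < 1. Then for every z ∈ [0,1] the integral ∫_z^1 g(u) du is finite, the function φ(z) = exp(−∫_z^1 g(u) du) satisfies 0 < φ(z) ≤ 1 on [0,1], φ is continuous and nondecreasing on [0,1], and φ(1) = 1. -/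

import Mathlib

open MeasureTheory

/-- Laplace transform of a (Borel) measure on `ℝ`. -/
noncomputable def lapl (μ : Measure ℝ) (θ : ℝ) : ℝ :=
  ∫ x, Real.exp (-θ * x) ∂μ

/-!
Integrating `1 - θ x ≤ exp (-θ x) ≤ 1` bounds a Laplace transform between `1 - θ m` and `1`, where
`m` is the first moment. Applied to the repair time and then to the service time, this gives
`0 ≤ 1 - δᵢ u ≤ ρᵢ (1 - u)` for `u ≤ 1`, with `ρᵢ = λ μ_{i,1} (1 + βᵢ γ_{i,1})`. Both the numerator
and the denominator of `g` vanish at `u = 1`, but stability, `ρ₁ < 1`, keeps the denominator above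
`ν (1 - ρ₁) (1 - u)`, while the numerator is nonnegative and `O(1 - u)`. Hence `g` is nonnegative
and bounded on `[0, 1)`.
-/

section Integration

lemma measure_Iio_eq_zero_iff_ae_le {X : Type*} [LinearOrder X] [MeasurableSpace X]
    {μ : Measure X} {a : X} : μ (Set.Iio a) = 0 ↔ ∀ᵐ x ∂μ, a ≤ x := by
  simp [measure_eq_zero_iff_ae_notMem]

lemma continuousOn_intervalIntegral_left {μ : Measure ℝ} [NullSingletonClass μ] {f : ℝ → ℝ}
    {a b : ℝ} (hf : IntervalIntegrable f μ a b) :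
    ContinuousOn (fun z => ∫ u in z..b, f u ∂μ) (Set.uIcc a b) := by
  simp only [intervalIntegral.integral_symm b]
  exact (intervalIntegral.continuousOn_primitive_interval' hf Set.right_mem_uIcc).neg

lemma antitoneOn_intervalIntegral_left {μ : Measure ℝ} {f : ℝ → ℝ} {a b : ℝ}
    (hf : IntervalIntegrable f μ a b) (hf0 : 0 ≤ᵐ[μ.restrict (Set.Ioc a b)] f) :
    AntitoneOn (fun z => ∫ u in z..b, f u ∂μ) (Set.Icc a b) := by
  intro x hx y hy hxy
  have hsub : Set.Ioc x b ⊆ Set.Ioc a b := Set.Ioc_subset_Ioc_left hx.1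
  refine intervalIntegral.integral_mono_interval hxy hy.2 le_rfl
    (ae_restrict_of_ae_restrict_of_subset hsub hf0) (hf.mono_set ?_)
  exact Set.uIcc_subset_uIcc (Set.Icc_subset_uIcc hx) Set.right_mem_uIcc

lemma intervalIntegrable_div_of_linear_bounds {f g : ℝ → ℝ} {a b c C : ℝ} (hab : a ≤ b)
    (hc : 0 < c) (hf : AEMeasurable f (volume.restrict (Set.Ioo a b)))
    (hg : AEMeasurable g (volume.restrict (Set.Ioo a b)))
    (hfC : ∀ u ∈ Set.Ioo a b, |f u| ≤ C * (b - u))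
    (hgc : ∀ u ∈ Set.Ioo a b, c * (b - u) ≤ g u) :
    IntervalIntegrable (fun u => f u / g u) volume a b := by
  rw [intervalIntegrable_iff_integrableOn_Ioo_of_le hab]
  refine Integrable.of_bound (C := C / c) (hf.div hg).aestronglyMeasurable ?_
  refine (ae_restrict_iff' measurableSet_Ioo).2 (ae_of_all _ fun u hu => ?_)
  have hbu : 0 < b - u := sub_pos.2 hu.2
  have hcu : 0 < c * (b - u) := mul_pos hc hbu
  calc ‖f u / g u‖ = |f u| / g u := by
        rw [Real.norm_eq_abs, abs_div, abs_of_pos (hcu.trans_le (hgc u hu))]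
    _ ≤ C * (b - u) / (c * (b - u)) :=
        div_le_div₀ ((abs_nonneg _).trans (hfC u hu)) (hfC u hu) hcu (hgc u hu)
    _ = C / c := mul_div_mul_right C c hbu.ne'

end Integration

section LaplaceTransform

variable {μ : Measure ℝ} {θ : ℝ}

lemma measurable_lapl (μ : Measure ℝ) [SFinite μ] : Measurable (lapl μ) := by
  have hexp : Continuous (Function.uncurry fun θ x : ℝ => Real.exp (-θ * x)) := by
    unfold Function.uncurry
    fun_prop
  exact (hexp.stronglyMeasurable.integral_prod_right (ν := μ)).measurable

lemma ae_exp_neg_mul_le_one (hμ : ∀ᵐ x ∂μ, 0 ≤ x) (hθ : 0 ≤ θ) :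
    ∀ᵐ x ∂μ, Real.exp (-θ * x) ≤ 1 := by
  filter_upwards [hμ] with x hx
  exact Real.exp_le_one_iff.2 (mul_nonpos_of_nonpos_of_nonneg (neg_nonpos.2 hθ) hx)

lemma integrable_exp_neg_mul [IsFiniteMeasure μ] (hμ : ∀ᵐ x ∂μ, 0 ≤ x) (hθ : 0 ≤ θ) :
    Integrable (fun x => Real.exp (-θ * x)) μ := by
  refine Integrable.of_bound (C := 1) (by fun_prop) ?_
  simpa only [Real.norm_eq_abs, Real.abs_exp] using ae_exp_neg_mul_le_one hμ hθ

lemma lapl_le_measureReal_univ [IsFiniteMeasure μ] (hμ : ∀ᵐ x ∂μ, 0 ≤ x) (hθ : 0 ≤ θ) :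
    lapl μ θ ≤ μ.real Set.univ := by
  simpa [lapl] using integral_mono_ae (integrable_exp_neg_mul hμ hθ) (integrable_const 1)
    (ae_exp_neg_mul_le_one hμ hθ)

lemma measureReal_univ_sub_le_lapl [IsFiniteMeasure μ] (hμ : ∀ᵐ x ∂μ, 0 ≤ x)
    (hint : Integrable (fun x => x) μ) (hθ : 0 ≤ θ) :
    μ.real Set.univ - θ * ∫ x, x ∂μ ≤ lapl μ θ := by
  calc μ.real Set.univ - θ * ∫ x, x ∂μ = ∫ x, (1 - θ * x) ∂μ := by
        rw [integral_sub (integrable_const 1) (hint.const_mul θ), integral_const_mul]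
        simp
    _ ≤ lapl μ θ := by
        refine integral_mono ((integrable_const 1).sub (hint.const_mul θ))
          (integrable_exp_neg_mul hμ hθ) fun x => ?_
        simpa only [neg_mul] using Real.one_sub_le_exp_neg (θ * x)

end LaplaceTransform

section Arrivals

/-- The exponent `h(z)` of the paper: evaluating the Laplace transform of the service time at `h(z)`
accounts for the arrivals (rate `lam`) during the service itself and during the repairs (with law
`R`) after the failures (rate `beta`) that interrupt it. -/
noncomputable def serviceExponent (lam beta : ℝ) (R : Measure ℝ) (z : ℝ) : ℝ :=
  lam + beta - lam * z - beta * lapl R (lam - lam * z)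

/-- The function `δ(z)` of the paper: the probability generating function of the number of arrivals
while the server is occupied by one call, repairs included. -/
noncomputable def arrivalsPGF (lam beta : ℝ) (S R : Measure ℝ) (z : ℝ) : ℝ :=
  lapl S (serviceExponent lam beta R z)

/-- The load `λ μ (1 + β γ)`: the mean number of arrivals while the server is occupied by one
call, repairs included. -/
noncomputable def serviceLoad (lam beta : ℝ) (S R : Measure ℝ) : ℝ :=
  lam * (∫ x, x ∂S) * (1 + beta * ∫ x, x ∂ R)

variable {lam beta u : ℝ} {S R : Measure ℝ}

lemma measurable_arrivalsPGF (lam beta : ℝ) (S R : Measure ℝ) [SFinite S] [SFinite R] :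
    Measurable (arrivalsPGF lam beta S R) := by
  have hR := measurable_lapl R
  have hexponent : Measurable (serviceExponent lam beta R) := by
    unfold serviceExponent
    fun_prop
  exact (measurable_lapl S).comp hexponent

lemma serviceExponent_nonneg [IsProbabilityMeasure R] (hlam : 0 ≤ lam) (hbeta : 0 ≤ beta)
    (hR : ∀ᵐ x ∂ R, 0 ≤ x) (hu : u ≤ 1) : 0 ≤ serviceExponent lam beta R u := by
  have harg : 0 ≤ lam - lam * u := sub_nonneg.2 (mul_le_of_le_one_right hlam hu)
  have hlapl : lapl R (lam - lam * u) ≤ 1 := by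
    simpa using lapl_le_measureReal_univ hR harg
  unfold serviceExponent
  linarith [mul_le_of_le_one_right hbeta hlapl]

lemma serviceExponent_le [IsProbabilityMeasure R] (hlam : 0 ≤ lam) (hbeta : 0 ≤ beta)
    (hR : ∀ᵐ x ∂ R, 0 ≤ x) (hRint : Integrable (fun x => x) R) (hu : u ≤ 1) :
    serviceExponent lam beta R u ≤ lam * (1 + beta * ∫ x, x ∂ R) * (1 - u) := by
  have harg : 0 ≤ lam - lam * u := sub_nonneg.2 (mul_le_of_le_one_right hlam hu)
  have hlapl : 1 - (lam - lam * u) * ∫ x, x ∂ R ≤ lapl R (lam - lam * u) := by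
    simpa using measureReal_univ_sub_le_lapl hR hRint harg
  unfold serviceExponent
  linarith [mul_le_mul_of_nonneg_left hlapl hbeta]

variable [IsProbabilityMeasure S] [IsProbabilityMeasure R]

lemma arrivalsPGF_le_one (hlam : 0 ≤ lam) (hbeta : 0 ≤ beta) (hS : ∀ᵐ x ∂S, 0 ≤ x)
    (hR : ∀ᵐ x ∂ R, 0 ≤ x) (hu : u ≤ 1) : arrivalsPGF lam beta S R u ≤ 1 := by
  simpa [arrivalsPGF] using
    lapl_le_measureReal_univ hS (serviceExponent_nonneg hlam hbeta hR hu)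

lemma one_sub_arrivalsPGF_le (hlam : 0 ≤ lam) (hbeta : 0 ≤ beta) (hS : ∀ᵐ x ∂S, 0 ≤ x)
    (hR : ∀ᵐ x ∂ R, 0 ≤ x) (hSint : Integrable (fun x => x) S)
    (hRint : Integrable (fun x => x) R) (hu : u ≤ 1) :
    1 - arrivalsPGF lam beta S R u ≤ serviceLoad lam beta S R * (1 - u) := by
  have hlapl : 1 - serviceExponent lam beta R u * ∫ x, x ∂S ≤ arrivalsPGF lam beta S R u := by
    simpa [arrivalsPGF] using
      measureReal_univ_sub_le_lapl hS hSint (serviceExponent_nonneg hlam hbeta hR hu)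
  calc 1 - arrivalsPGF lam beta S R u ≤ serviceExponent lam beta R u * ∫ x, x ∂S := by
        linarith
    _ ≤ lam * (1 + beta * ∫ x, x ∂ R) * (1 - u) * ∫ x, x ∂S :=
        mul_le_mul_of_nonneg_right (serviceExponent_le hlam hbeta hR hRint hu)
          (integral_nonneg_of_ae hS)
    _ = serviceLoad lam beta S R * (1 - u) := by
        unfold serviceLoad
        ring

lemma abs_one_sub_arrivalsPGF_le (hlam : 0 ≤ lam) (hbeta : 0 ≤ beta) (hS : ∀ᵐ x ∂S, 0 ≤ x)
    (hR : ∀ᵐ x ∂ R, 0 ≤ x) (hSint : Integrable (fun x => x) S)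
    (hRint : Integrable (fun x => x) R) (hu : u ≤ 1) :
    |1 - arrivalsPGF lam beta S R u| ≤ serviceLoad lam beta S R * (1 - u) := by
  rw [abs_of_nonneg (sub_nonneg.2 (arrivalsPGF_le_one hlam hbeta hS hR hu))]
  exact one_sub_arrivalsPGF_le hlam hbeta hS hR hSint hRint hu

lemma le_arrivalsPGF (hlam : 0 ≤ lam) (hbeta : 0 ≤ beta) (hS : ∀ᵐ x ∂S, 0 ≤ x)
    (hR : ∀ᵐ x ∂ R, 0 ≤ x) (hSint : Integrable (fun x => x) S)
    (hRint : Integrable (fun x => x) R) (hload : serviceLoad lam beta S R ≤ 1) (hu : u ≤ 1) :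
    u ≤ arrivalsPGF lam beta S R u := by
  have hloss := one_sub_arrivalsPGF_le hlam hbeta hS hR hSint hRint hu
  linarith [mul_le_of_le_one_left (sub_nonneg.2 hu) hload]

end Arrivals

section IdleLogDeriv

/-- The function `g` of the paper, which is the logarithmic derivative of `φ`, for arbitrary
`δ₁` and `δ₂`. -/
noncomputable def idleLogDeriv (lam alpha nu : ℝ) (δ₁ δ₂ : ℝ → ℝ) (u : ℝ) : ℝ :=
  (lam * (1 - δ₁ u) + alpha * (1 - δ₂ u)) / (nu * (δ₁ u - u))

variable {lam alpha nu : ℝ} {δ₁ δ₂ : ℝ → ℝ}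

lemma idleLogDeriv_nonneg {u : ℝ} (hlam : 0 ≤ lam) (halpha : 0 ≤ alpha) (hnu : 0 ≤ nu)
    (hδ₁ : δ₁ u ≤ 1) (hδ₂ : δ₂ u ≤ 1) (hu : u ≤ δ₁ u) :
    0 ≤ idleLogDeriv lam alpha nu δ₁ δ₂ u := by
  rw [← sub_nonneg] at hδ₁ hδ₂ hu
  unfold idleLogDeriv
  positivity

lemma intervalIntegrable_idleLogDeriv {a ρ₁ ρ₂ : ℝ} (lam alpha : ℝ) (hnu : 0 < nu) (ha : a ≤ 1)
    (hδ₁ : Measurable δ₁) (hδ₂ : Measurable δ₂)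
    (hρ₁ : ∀ u ∈ Set.Ioo a 1, |1 - δ₁ u| ≤ ρ₁ * (1 - u))
    (hρ₂ : ∀ u ∈ Set.Ioo a 1, |1 - δ₂ u| ≤ ρ₂ * (1 - u)) (hstab : ρ₁ < 1) :
    IntervalIntegrable (idleLogDeriv lam alpha nu δ₁ δ₂) volume a 1 := by
  refine intervalIntegrable_div_of_linear_bounds (c := nu * (1 - ρ₁))
    (C := |lam| * ρ₁ + |alpha| * ρ₂) ha (mul_pos hnu (sub_pos.2 hstab)) (by fun_prop)
    (by fun_prop) (fun u hu => ?_) (fun u hu => ?_)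
  · calc |lam * (1 - δ₁ u) + alpha * (1 - δ₂ u)|
        ≤ |lam| * |1 - δ₁ u| + |alpha| * |1 - δ₂ u| := by
          simpa only [abs_mul] using abs_add_le (lam * (1 - δ₁ u)) (alpha * (1 - δ₂ u))
      _ ≤ |lam| * (ρ₁ * (1 - u)) + |alpha| * (ρ₂ * (1 - u)) := by
          gcongr
          exacts [hρ₁ u hu, hρ₂ u hu]
      _ = (|lam| * ρ₁ + |alpha| * ρ₂) * (1 - u) := by ring
  · rw [mul_assoc]
    exact mul_le_mul_of_nonneg_left (by linarith [le_of_abs_le (hρ₁ u hu)]) hnu.le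

end IdleLogDeriv

/-- under the stability condition `λμ_{1,1}(1 + β₁γ_{1,1}) < 1`, for
every `z ∈ [0,1]` the integral `∫_z^1 g(u) du` is finite, and
`φ(z) = exp(−∫_z^1 g(u) du)` satisfies `0 < φ(z) ≤ 1` on `[0,1]`, is continuous and
nondecreasing on `[0,1]`, and `φ(1) = 1`. -/
theorem phi_properties (lam alpha nu beta1 beta2 : ℝ)
    (hlam : 0 < lam) (halpha : 0 < alpha) (hnu : 0 < nu)
    (hbeta1 : 0 ≤ beta1) (hbeta2 : 0 ≤ beta2)
    (S1 R1 S2 R2 : Measure ℝ)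
    [IsProbabilityMeasure S1] [IsProbabilityMeasure R1]
    [IsProbabilityMeasure S2] [IsProbabilityMeasure R2]
    (hS1 : S1 (Set.Iio 0) = 0) (hR1 : R1 (Set.Iio 0) = 0)
    (hS2 : S2 (Set.Iio 0) = 0) (hR2 : R2 (Set.Iio 0) = 0)
    (hiS1 : Integrable (fun x => x) S1) (hiR1 : Integrable (fun x => x) R1)
    (hiS2 : Integrable (fun x => x) S2) (hiR2 : Integrable (fun x => x) R2)
    (mu11 gamma11 mu21 gamma21 : ℝ)
    (hmu11 : mu11 = ∫ x, x ∂S1) (hgamma11 : gamma11 = ∫ x, x ∂ R1)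
    (hmu21 : mu21 = ∫ x, x ∂S2) (hgamma21 : gamma21 = ∫ x, x ∂ R2)
    (h1 h2 δ1 δ2 g φ : ℝ → ℝ)
    (hh1 : ∀ z, h1 z = lam + beta1 - lam * z - beta1 * lapl R1 (lam - lam * z))
    (hh2 : ∀ z, h2 z = lam + beta2 - lam * z - beta2 * lapl R2 (lam - lam * z))
    (hδ1 : ∀ z, δ1 z = lapl S1 (h1 z)) (hδ2 : ∀ z, δ2 z = lapl S2 (h2 z))
    (hg : ∀ u, g u = (lam * (1 - δ1 u) + alpha * (1 - δ2 u)) / (nu * (δ1 u - u)))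
    (hφ : ∀ z, φ z = Real.exp (-(∫ u in z..1, g u)))
    (hstab : lam * mu11 * (1 + beta1 * gamma11) < 1) :
    (∀ z ∈ Set.Icc (0 : ℝ) 1, IntervalIntegrable g volume z 1) ∧
      (∀ z ∈ Set.Icc (0 : ℝ) 1, 0 < φ z ∧ φ z ≤ 1) ∧
      ContinuousOn φ (Set.Icc 0 1) ∧
      MonotoneOn φ (Set.Icc 0 1) ∧
      φ 1 = 1 := by
  obtain rfl : δ1 = arrivalsPGF lam beta1 S1 R1 := funext fun z => by rw [hδ1, hh1]; rfl
  obtain rfl : δ2 = arrivalsPGF lam beta2 S2 R2 := funext fun z => by rw [hδ2, hh2]; rfl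
  replace hg : g = idleLogDeriv lam alpha nu _ _ := funext hg
  obtain rfl := funext hφ
  have hload : serviceLoad lam beta1 S1 R1 < 1 := by
    rwa [serviceLoad, ← hmu11, ← hgamma11]
  simp only [measure_Iio_eq_zero_iff_ae_le] at hS1 hR1 hS2 hR2
  have hint : ∀ z ≤ 1, IntervalIntegrable g volume z 1 := fun z hz => hg ▸
    intervalIntegrable_idleLogDeriv lam alpha hnu hz (measurable_arrivalsPGF lam beta1 S1 R1)
      (measurable_arrivalsPGF lam beta2 S2 R2)
      (fun u hu => abs_one_sub_arrivalsPGF_le hlam.le hbeta1 hS1 hR1 hiS1 hiR1 hu.2.le)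
      (fun u hu => abs_one_sub_arrivalsPGF_le hlam.le hbeta2 hS2 hR2 hiS2 hiR2 hu.2.le) hload
  have hnonneg : ∀ u ≤ 1, 0 ≤ g u := fun u hu => hg ▸
    idleLogDeriv_nonneg hlam.le halpha.le hnu.le (arrivalsPGF_le_one hlam.le hbeta1 hS1 hR1 hu)
      (arrivalsPGF_le_one hlam.le hbeta2 hS2 hR2 hu)
      (le_arrivalsPGF hlam.le hbeta1 hS1 hR1 hiS1 hiR1 hload.le hu)
  have hanti := antitoneOn_intervalIntegral_left (hint 0 zero_le_one)
    (ae_restrict_of_forall_mem measurableSet_Ioc fun u hu => hnonneg u hu.2)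
  refine ⟨fun z hz => hint z hz.2, fun z hz => ⟨Real.exp_pos _, ?_⟩,
    ((continuousOn_intervalIntegral_left (hint 0 zero_le_one)).mono Set.Icc_subset_uIcc).neg.rexp,
    fun x hx y hy hxy => Real.exp_le_exp.2 (neg_le_neg (hanti hx hy hxy)), by simp⟩
  exact Real.exp_le_one_iff.2 (neg_nonpos.2
    (intervalIntegral.integral_nonneg hz.2 fun u hu => hnonneg u hu.2))
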